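/- arXiv:2604.00914 — 2 statements merged into one kernel-verified Lean document; each statement's English description precedes it below -/
import Mathlib

section
/- For every integer k ≥ 1 and every real x ∈ (0, 2π), the series Σ_{j=k+1}^{∞} cos((j+1/2)x)/(j(j+1)) converges absolutely, and 2·sin(x/2)·R_k(x) = cos((k+1/2)x)/(k+1) − Σ_{j=k+1}^{∞} cos((j+1/2)x)/(j(j+1)), where R_k(x) = (π − x)/2 − Σ_{j=1}^{k} sin(j x)/j. -/
open Real

/-!
Since `2 sin(x/2) sin(jx) = cos((j-1/2)x) - cos((j+1/2)x)`, summation by parts turns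
`2 sin(x/2) ∑_{j>k} sin(jx)/j` into the right-hand side of the identity. It remains to know that
`∑ sin(jx)/j` converges to `(π - x)/2`: this is the imaginary part of `∑ wʲ/j = -log (1 - w)` at
`w = exp(ix)`. On the unit circle away from `w = 1`, this series converges by the same summation
by parts applied to `wʲ`, and Abel's limit theorem identifies its value.
-/

open Filter Topology Finset

section SummationByParts

lemma sum_range_sub_div_natCast_add {K : Type*} [Field K] [CharZero K] (c : ℕ → K) (k n : ℕ) :
    ∑ j ∈ range n, (c j - c (j + 1)) / (j + k + 1 : ℕ) =
      c 0 / (k + 1) - ∑ j ∈ range n, c (j + 1) / ((j + k + 1 : ℕ) * ((j + k + 1 : ℕ) + 1))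
        - c n / (n + k + 1 : ℕ) := by
  induction n with
  | zero => simp
  | succ n ih =>
    have h_succ : (n + k + 1 : K) ≠ 0 := mod_cast (n + k).succ_ne_zero
    have h_succ_succ : (n + k + 1 + 1 : K) ≠ 0 := mod_cast (n + k + 1).succ_ne_zero
    rw [sum_range_succ, ih, sum_range_succ, show n + 1 + k + 1 = n + k + 1 + 1 by ring]
    push_cast
    field_simp
    ring

variable {𝕜 : Type*} [RCLike 𝕜]

lemma summable_norm_div_natCast_mul_succ {c : ℕ → 𝕜} {C : ℝ} (hc : ∀ n, ‖c n‖ ≤ C) (k : ℕ) :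
    Summable fun j : ℕ ↦ ‖c j / ((j + k + 1 : ℕ) * ((j + k + 1 : ℕ) + 1))‖ := by
  have h_sq : Summable fun j : ℕ ↦ C * (1 / ((j + k + 1 : ℕ) : ℝ) ^ 2) :=
    ((summable_nat_add_iff (k + 1)).2 (Real.summable_one_div_nat_pow.2 one_lt_two)).mul_left C
  refine h_sq.of_nonneg_of_le (fun j ↦ norm_nonneg _) fun j ↦ ?_
  rw [← Nat.cast_succ, norm_div, norm_mul, RCLike.norm_natCast, RCLike.norm_natCast, mul_one_div,
    sq]
  have hC : 0 ≤ C := (norm_nonneg _).trans (hc 0)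
  gcongr
  exacts [hc j, Nat.le_succ _]

lemma tendsto_sum_range_sub_div_natCast_add {c : ℕ → 𝕜} {C : ℝ} (hc : ∀ n, ‖c n‖ ≤ C) (k : ℕ) :
    Tendsto (fun n ↦ ∑ j ∈ range n, (c j - c (j + 1)) / (j + k + 1 : ℕ)) atTop
      (𝓝 (c 0 / (k + 1) - ∑' j : ℕ, c (j + 1) / ((j + k + 1 : ℕ) * ((j + k + 1 : ℕ) + 1)))) := by
  have h_series :=
    (summable_norm_div_natCast_mul_succ (fun n ↦ hc (n + 1)) k).of_norm.hasSum.tendsto_sum_nat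
  have h_boundary : Tendsto (fun n ↦ c n / (n + k + 1 : ℕ)) atTop (𝓝 0) := by
    refine squeeze_zero_norm (fun n ↦ ?_)
      ((tendsto_const_div_atTop_nhds_zero_nat C).comp (tendsto_add_atTop_nat (k + 1)))
    rw [norm_div, RCLike.norm_natCast]
    exact div_le_div_of_nonneg_right (hc n) (Nat.cast_nonneg _)
  simpa only [sum_range_sub_div_natCast_add, sub_zero] using
    (h_series.const_sub _).sub h_boundary

lemma exists_tendsto_sum_range_pow_div {w : 𝕜} (hw : ‖w‖ ≤ 1) (hw_ne : w ≠ 1) :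
    ∃ l, Tendsto (fun n ↦ ∑ i ∈ range n, w ^ i / i) atTop (𝓝 l) := by
  have h_bound (n : ℕ) : ‖w ^ (n + 1) / (1 - w)‖ ≤ 1 / ‖1 - w‖ := by
    rw [norm_div, norm_pow]
    gcongr
    exact pow_le_one₀ (norm_nonneg w) hw
  have h_diff (n : ℕ) : w ^ (n + 1) / (1 - w) - w ^ (n + 1 + 1) / (1 - w) = w ^ (n + 1) := by
    field_simp [sub_ne_zero.2 hw_ne.symm]
    ring
  have h_parts := tendsto_sum_range_sub_div_natCast_add h_bound 0
  simp only [h_diff] at h_parts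
  refine ⟨_, (tendsto_add_atTop_iff_nat 1).1 (h_parts.congr fun n ↦ ?_)⟩
  simp [sum_range_succ']

end SummationByParts

section LogSeries

lemma one_sub_mem_slitPlane_of_norm_le_one {w : ℂ} (hw : ‖w‖ ≤ 1) (hw_ne : w ≠ 1) :
    1 - w ∈ Complex.slitPlane := by
  refine Or.inl ?_
  rw [Complex.sub_re, Complex.one_re, sub_pos]
  refine ((Complex.re_le_norm w).trans hw).lt_of_ne fun h_re ↦ hw_ne ?_
  have h_im : w.im = 0 := Complex.abs_re_eq_norm.1 <|
    (Complex.abs_re_le_norm w).antisymm (by simpa [h_re] using hw)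
  exact Complex.ext h_re h_im

lemma tendsto_sum_range_pow_div_neg_log {w : ℂ} (hw : ‖w‖ ≤ 1) (hw_ne : w ≠ 1) :
    Tendsto (fun n ↦ ∑ i ∈ range n, w ^ i / i) atTop (𝓝 (-Complex.log (1 - w))) := by
  obtain ⟨l, hl⟩ := exists_tendsto_sum_range_pow_div hw hw_ne
  have h_abel := tendsto_map'_iff.1 (Complex.tendsto_tsum_powerSeries_nhdsWithin_lt hl)
  have h_log : Tendsto (fun r : ℝ ↦ -Complex.log (1 - w * r)) (𝓝[<] 1)
      (𝓝 (-Complex.log (1 - w))) := by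
    have h_arg : ContinuousAt (fun r : ℝ ↦ 1 - w * (r : ℂ)) 1 := by fun_prop
    have h_cont : ContinuousAt (fun r : ℝ ↦ -Complex.log (1 - w * r)) 1 :=
      (h_arg.clog (by simpa using one_sub_mem_slitPlane_of_norm_le_one hw hw_ne)).neg
    simpa using h_cont.tendsto.mono_left nhdsWithin_le_nhds
  have h_eq : ∀ᶠ r : ℝ in 𝓝[<] 1, -Complex.log (1 - w * r) = ∑' n : ℕ, w ^ n / n * (r : ℂ) ^ n := by
    filter_upwards [Ioo_mem_nhdsLT zero_lt_one] with r hr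
    have h_norm : ‖w * r‖ < 1 := by
      rw [norm_mul, Complex.norm_of_nonneg hr.1.le]
      exact (mul_le_of_le_one_left hr.1.le hw).trans_lt hr.2
    simp only [← (Complex.hasSum_taylorSeries_neg_log h_norm).tsum_eq, mul_pow, div_mul_eq_mul_div]
  exact tendsto_nhds_unique (h_log.congr' h_eq) h_abel ▸ hl

end LogSeries

section SineSeries

lemma one_sub_exp_mul_I (z : ℂ) :
    1 - Complex.exp (z * Complex.I) =
      2 * Complex.sin (z / 2) * Complex.exp ((z - π) / 2 * Complex.I) := by
  have h_shift : Complex.exp ((z - π) / 2 * Complex.I) =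
      Complex.exp (z / 2 * Complex.I) * -Complex.I := by
    rw [← Complex.exp_neg_pi_div_two_mul_I, ← Complex.exp_add]
    ring_nf
  have h_sq : Complex.exp (z * Complex.I) = Complex.exp (z / 2 * Complex.I) ^ 2 := by
    rw [← Complex.exp_nat_mul]
    push_cast
    ring_nf
  have h_inv : Complex.exp (-(z / 2) * Complex.I) * Complex.exp (z / 2 * Complex.I) = 1 := by
    rw [← Complex.exp_add]
    simp
  rw [h_shift, h_sq, Complex.two_sin]
  linear_combination
    (Complex.exp (-(z / 2) * Complex.I) * Complex.exp (z / 2 * Complex.I)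
      - Complex.exp (z / 2 * Complex.I) ^ 2) * Complex.I_sq
      - h_inv

lemma sin_half_pos {x : ℝ} (hx : x ∈ Set.Ioo 0 (2 * π)) : 0 < sin (x / 2) :=
  sin_pos_of_pos_of_lt_pi (by linarith [hx.1]) (by linarith [hx.2])

lemma arg_one_sub_exp_mul_I {x : ℝ} (hx : x ∈ Set.Ioo 0 (2 * π)) :
    (1 - Complex.exp (x * Complex.I)).arg = (x - π) / 2 := by
  have h_polar : 1 - Complex.exp (x * Complex.I) =
      (2 * sin (x / 2) : ℝ) * Complex.exp (((x - π) / 2 : ℝ) * Complex.I) :=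
    mod_cast one_sub_exp_mul_I x
  rw [h_polar, Complex.arg_real_mul _ (mul_pos two_pos (sin_half_pos hx)),
    Complex.arg_exp_mul_I, toIocMod_eq_self]
  constructor <;> linarith [hx.1, hx.2, pi_pos]

lemma tendsto_sum_range_sin_div {x : ℝ} (hx : x ∈ Set.Ioo 0 (2 * π)) :
    Tendsto (fun n ↦ ∑ i ∈ range n, sin (i * x) / i) atTop (𝓝 ((π - x) / 2)) := by
  have h_ne : Complex.exp (x * Complex.I) ≠ 1 := by
    refine (sub_ne_zero.1 ?_).symm
    rw [one_sub_exp_mul_I]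
    exact mul_ne_zero (mul_ne_zero two_ne_zero (mod_cast (sin_half_pos hx).ne'))
      (Complex.exp_ne_zero _)
  have h_im := (Complex.continuous_im.tendsto _).comp
    (tendsto_sum_range_pow_div_neg_log (Complex.norm_exp_ofReal_mul_I x).le h_ne)
  rw [Complex.neg_im, Complex.log_im, arg_one_sub_exp_mul_I hx, ← neg_div, neg_sub] at h_im
  refine h_im.congr fun n ↦ ?_
  rw [Function.comp_apply, Complex.im_sum]
  refine sum_congr rfl fun i _ ↦ ?_
  rw [← Complex.exp_nat_mul, Complex.div_natCast_im, ← mul_assoc, ← Complex.ofReal_natCast,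
    ← Complex.ofReal_mul, Complex.exp_ofReal_mul_I_im]

lemma sum_range_comp_add_succ {M : Type*} [AddCommGroup M] {f : ℕ → M} (hf : f 0 = 0) (k n : ℕ) :
    ∑ j ∈ range n, f (j + k + 1) = ∑ i ∈ range (n + (k + 1)), f i - ∑ i ∈ Icc 1 k, f i := by
  rw [add_comm n, sum_range_add, sum_range_eq_add_Ico _ k.succ_pos, hf, zero_add,
    Nat.succ_eq_add_one, Ico_add_one_right_eq_Icc, add_sub_cancel_left]
  exact sum_congr rfl fun j _ ↦ by rw [add_comm (k + 1), add_assoc]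

lemma two_mul_sin_half_mul_sub_sum_sin_div {x s : ℝ}
    (hs : Tendsto (fun n ↦ ∑ i ∈ range n, sin (i * x) / i) atTop (𝓝 s)) (k : ℕ) :
    2 * sin (x / 2) * (s - ∑ j ∈ Icc 1 k, sin (j * x) / j) =
      cos ((k + 1 / 2) * x) / (k + 1)
        - ∑' j : ℕ, cos (((j + k + 1 : ℕ) + 1 / 2) * x) /
            ((j + k + 1 : ℕ) * ((j + k + 1 : ℕ) + 1)) := by
  have h_tail : Tendsto (fun n ↦ ∑ j ∈ range n, sin ((j + k + 1 : ℕ) * x) / (j + k + 1 : ℕ)) atTop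
      (𝓝 (s - ∑ j ∈ Icc 1 k, sin (j * x) / j)) := by
    simp only [sum_range_comp_add_succ (f := fun i : ℕ ↦ sin (i * x) / i) (by simp)]
    exact (hs.comp (tendsto_add_atTop_nat (k + 1))).sub_const _
  have h_parts := tendsto_sum_range_sub_div_natCast_add
    (c := fun j ↦ cos (((j + k : ℕ) + 1 / 2) * x)) (fun j ↦ abs_cos_le_one _) k
  have h_diff (j : ℕ) : cos (((j + k : ℕ) + 1 / 2) * x) - cos (((j + k + 1 : ℕ) + 1 / 2) * x) =
      2 * sin (x / 2) * sin ((j + k + 1 : ℕ) * x) := by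
    rw [mul_right_comm, two_mul_sin_mul_sin]
    push_cast
    ring_nf
  simp only [add_right_comm _ 1 k, h_diff, mul_div_assoc, ← mul_sum, zero_add] at h_parts
  exact tendsto_nhds_unique (h_tail.const_mul _) h_parts

end SineSeries

/-- For every `k ≥ 1` and `x ∈ (0, 2π)`, the tail series
`∑_{j=k+1}^∞ cos((j+1/2)x)/(j(j+1))` converges absolutely, and
`2 sin(x/2) R_k(x) = cos((k+1/2)x)/(k+1) - ∑_{j=k+1}^∞ cos((j+1/2)x)/(j(j+1))`,
where `R_k(x) = (π - x)/2 - ∑_{j=1}^k sin(jx)/j`. -/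
theorem lanczos_remainder_identity (k : ℕ) (hk : 1 ≤ k) (x : ℝ)
    (hx : x ∈ Set.Ioo (0 : ℝ) (2 * Real.pi)) :
    (Summable fun j : ℕ =>
        |Real.cos (((j + k + 1 : ℕ) + 1 / 2) * x) / ((j + k + 1 : ℕ) * ((j + k + 1 : ℕ) + 1))|) ∧
    2 * Real.sin (x / 2) * ((Real.pi - x) / 2 - ∑ j ∈ Finset.Icc 1 k, Real.sin (j * x) / j)
      = Real.cos ((k + 1 / 2) * x) / (k + 1)
        - ∑' j : ℕ,
            Real.cos (((j + k + 1 : ℕ) + 1 / 2) * x) / ((j + k + 1 : ℕ) * ((j + k + 1 : ℕ) + 1)) := by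
  refine ⟨?_, two_mul_sin_half_mul_sub_sum_sin_div (tendsto_sum_range_sin_div hx) k⟩
  exact summable_norm_div_natCast_mul_succ
    (c := fun j ↦ cos (((j + k + 1 : ℕ) + 1 / 2) * x)) (fun j ↦ abs_cos_le_one _) k
end

section
/- For every real m > 0, all integers k ≥ 1 and 1 ≤ k' ≤ k, and every θ ∈ [0, π], the damped partial sum satisfies |g(θ) − g^m_{k',k}(θ)| ≤ d^m_{k',k}·J(θ)/(π (k'+1)) + m·C_m·J(θ)/(k+1) + m·π·(π−θ)/(3 (k+1)^2). -/
open Real MeasureTheory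

/-- The step function on `[0, π]`: `1` on `(β, α)`, `1/2` at `α` and `β`, `0` elsewhere. -/
noncomputable def stepG (α β θ : ℝ) : ℝ :=
  if θ = α ∨ θ = β then 1 / 2 else if θ ∈ Set.Ioo β α then 1 else 0

/-- Fourier coefficients of the step function. -/
noncomputable def fourierC (α β : ℝ) : ℕ → ℝ
  | 0 => (α - β) / Real.pi
  | (j + 1) => (2 / Real.pi) * (Real.sin ((j + 1) * α) - Real.sin ((j + 1) * β)) / (j + 1)

/-- Exponent-`m` Lanczos damping factors `d^m_{j,k}`, with `d^m_{0,k} = 1`. -/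
noncomputable def dampL (m : ℝ) (k j : ℕ) : ℝ :=
  if j = 0 then 1
  else (Real.sin (j * Real.pi / (k + 1)) / (j * Real.pi / (k + 1))) ^ m

/-- The damped partial sum `g^m_{k',k}(θ) = ∑_{j=0}^{k'} c_j d^m_{j,k} cos(jθ)`. -/
noncomputable def dampedGk (α β m : ℝ) (k k' : ℕ) (θ : ℝ) : ℝ :=
  ∑ j ∈ Finset.range (k' + 1), fourierC α β j * dampL m k j * Real.cos (j * θ)

/-- The constant `C_m = ∫_0^π (sin u)^{m-1}(sin u - u cos u)/u^{m+2} du`. -/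
noncomputable def lanczosCm (m : ℝ) : ℝ :=
  ∫ u in Set.Ioo (0 : ℝ) Real.pi,
    Real.sin u ^ (m - 1) * (Real.sin u - u * Real.cos u) / u ^ (m + 2)

/-- The quantity `J(θ)` controlling the pointwise Fourier error. -/
noncomputable def Jfun (α β θ : ℝ) : ℝ :=
  if θ = α then
    1 / |Real.sin α| + 1 / |Real.sin ((α + β) / 2)| + 1 / |Real.sin ((α - β) / 2)|
  else if θ = β then
    1 / |Real.sin β| + 1 / |Real.sin ((α + β) / 2)| + 1 / |Real.sin ((α - β) / 2)|
  else
    1 / |Real.sin ((θ + α) / 2)| + 1 / |Real.sin ((θ - α) / 2)|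
      + 1 / |Real.sin ((θ + β) / 2)| + 1 / |Real.sin ((θ - β) / 2)|

/-!
Abel summation writes the error as the undamped error at index `k'`, weighted by `d_{k'}`, plus the
undamped errors at `j < k'`, weighted by `d_j - d_{j+1}`.

The step function is a combination of sawtooth waves `Im (-log (1 - exp (i x)))` translated to the
jumps. Abel summation also gives `|-log (1 - z) - ∑_{j ≤ n} z ^ j / j| ≤ 2 / ((n + 1) |1 - z|)` for
`|z| ≤ 1`, `z ≠ 1`, so the `n`-th undamped error is at most `J(θ) / (π (n + 1))`.

With `h = π / (k + 1)`, the damping factors are `d_j = sinc (j h) ^ m`. The integrand `q` of `C_m`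
satisfies `-(sinc ^ m)' = m u q(u)`, and `u ≤ (j + 1) h` on the `j`-th subinterval, so
`∑_{j < k'} (d_j - d_{j+1}) / (j + 1) ≤ m h C_m`.
-/

section Abel

open Finset

variable {E : Type*}

theorem smul_sub_sum_range_succ_smul {R : Type*} [Ring R] [AddCommGroup E] [Module R E]
    (d : ℕ → R) (c : ℕ → E) (s : E) (n : ℕ) :
    d 0 • s - ∑ j ∈ range (n + 1), d j • c j =
      d n • (s - ∑ i ∈ range (n + 1), c i) +
        ∑ j ∈ range n, (d j - d (j + 1)) • (s - ∑ i ∈ range (j + 1), c i) := by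
  induction n with
  | zero => simp [smul_sub]
  | succ n ih =>
    rw [sum_range_succ, ← sub_sub, ih, sum_range_succ c (n + 1),
      sum_range_succ (fun j ↦ (d j - d (j + 1)) • (s - ∑ i ∈ range (j + 1), c i))]
    simp only [smul_sub, smul_add, sub_smul]
    abel

theorem norm_smul_sub_sum_range_succ_smul_le [SeminormedAddCommGroup E] [NormedSpace ℝ E]
    {d b : ℕ → ℝ} {c : ℕ → E} {s : E} {n : ℕ} (hd : ∀ j < n, d (j + 1) ≤ d j) (hn : 0 ≤ d n)
    (hb : ∀ j ≤ n, ‖s - ∑ i ∈ range (j + 1), c i‖ ≤ b j) :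
    ‖d 0 • s - ∑ j ∈ range (n + 1), d j • c j‖ ≤
      d n * b n + ∑ j ∈ range n, (d j - d (j + 1)) * b j := by
  rw [smul_sub_sum_range_succ_smul]
  refine (norm_add_le _ _).trans (add_le_add ?_ (norm_sum_le_of_le _ fun j hj ↦ ?_))
  · rw [norm_smul_of_nonneg hn]
    exact mul_le_mul_of_nonneg_left (hb n le_rfl) hn
  · have hj := mem_range.1 hj
    have hdj := sub_nonneg.2 (hd j hj)
    rw [norm_smul_of_nonneg hdj]
    exact mul_le_mul_of_nonneg_left (hb j hj.le) hdj

theorem norm_sum_range_smul_le_of_antitone [SeminormedAddCommGroup E] [NormedSpace ℝ E]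
    {d : ℕ → ℝ} {c : ℕ → E} {B : ℝ} (hd : Antitone d) (hd₀ : ∀ n, 0 ≤ d n)
    (hB : ∀ n, ‖∑ i ∈ range n, c i‖ ≤ B) (n : ℕ) :
    ‖∑ j ∈ range n, d j • c j‖ ≤ d 0 * B := by
  cases n with
  | zero => simpa using mul_nonneg (hd₀ 0) ((norm_nonneg _).trans (hB 0))
  | succ n =>
    have h := norm_smul_sub_sum_range_succ_smul_le (c := c) (s := 0) (b := fun _ ↦ B) (n := n)
      (fun j _ ↦ hd j.le_succ) (hd₀ n) (fun j _ ↦ by simpa using hB (j + 1))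
    rwa [smul_zero, zero_sub, norm_neg, ← sum_mul, sum_range_sub', ← add_mul,
      add_sub_cancel] at h

end Abel

section Logarithm

open Finset Filter Topology

variable {z : ℂ}

theorem norm_geom_sum_le_two_div {K : Type*} [NormedDivisionRing K] {z : K} (hz : ‖z‖ ≤ 1)
    (hz₁ : z ≠ 1) (n : ℕ) : ‖∑ i ∈ range n, z ^ i‖ ≤ 2 / ‖1 - z‖ := by
  rw [le_div_iff₀ (norm_pos_iff.2 (sub_ne_zero.2 hz₁.symm)), ← norm_mul, geom_sum_mul_neg]
  calc ‖1 - z ^ n‖ ≤ ‖(1 : K)‖ + ‖z ^ n‖ := norm_sub_le _ _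
    _ ≤ 1 + 1 := by
      rw [norm_one, norm_pow]
      gcongr
      exact pow_le_one₀ (norm_nonneg z) hz
    _ = 2 := one_add_one_eq_two

theorem norm_sum_range_pow_div_le (hz : ‖z‖ ≤ 1) (hz₁ : z ≠ 1) (n N : ℕ) :
    ‖∑ i ∈ range N, z ^ (i + n + 1) / ((i + n : ℕ) + 1)‖ ≤ 2 / ((n + 1) * ‖1 - z‖) := by
  have hanti : Antitone fun i : ℕ ↦ 1 / ((i + n : ℕ) + 1 : ℝ) := fun i j hij ↦ by
    dsimp only
    gcongr
  have h := norm_sum_range_smul_le_of_antitone hanti (fun i ↦ by positivity)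
    (norm_geom_sum_le_two_div hz hz₁) N
  calc ‖∑ i ∈ range N, z ^ (i + n + 1) / ((i + n : ℕ) + 1)‖
      = ‖z ^ (n + 1) * ∑ i ∈ range N, (1 / ((i + n : ℕ) + 1 : ℝ)) • z ^ i‖ := by
        rw [mul_sum]
        congr! 2 with i
        rw [Complex.real_smul]
        push_cast
        ring
    _ ≤ 1 * (1 / ((0 + n : ℕ) + 1) * (2 / ‖1 - z‖)) := by
        rw [norm_mul, norm_pow]
        gcongr
        exact pow_le_one₀ (norm_nonneg z) hz
    _ = 2 / ((n + 1) * ‖1 - z‖) := by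
        rw [one_mul, zero_add, div_mul_div_comm, one_mul]

theorem norm_neg_log_one_sub_sub_sum_le_of_norm_lt_one (hz : ‖z‖ < 1) (n : ℕ) :
    ‖-Complex.log (1 - z) - ∑ j ∈ range n, z ^ (j + 1) / (j + 1)‖ ≤
      2 / ((n + 1) * ‖1 - z‖) := by
  have hz₁ : z ≠ 1 := fun h ↦ by simp [h] at hz
  have htail := (hasSum_nat_add_iff' n).2 (Complex.hasSum_taylorSeries_neg_log' hz)
  exact le_of_tendsto htail.tendsto_sum_nat.norm
    (.of_forall fun N ↦ norm_sum_range_pow_div_le hz.le hz₁ n N)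

theorem one_sub_mem_slitPlane (hz : ‖z‖ ≤ 1) (hz₁ : z ≠ 1) : 1 - z ∈ Complex.slitPlane := by
  rw [Complex.mem_slitPlane_iff]
  by_contra! h
  simp only [Complex.sub_re, Complex.one_re, Complex.sub_im, Complex.one_im, zero_sub,
    neg_eq_zero] at h
  have hre : z.re = 1 := le_antisymm ((Complex.re_le_norm z).trans hz) (by linarith)
  exact hz₁ (Complex.ext hre h.2)

theorem norm_neg_log_one_sub_sub_sum_le (hz : ‖z‖ ≤ 1) (hz₁ : z ≠ 1) (n : ℕ) :
    ‖-Complex.log (1 - z) - ∑ j ∈ range n, z ^ (j + 1) / (j + 1)‖ ≤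
      2 / ((n + 1) * ‖1 - z‖) := by
  have hslit : 1 - ((1 : ℝ) : ℂ) * z ∈ Complex.slitPlane := by
    simpa using one_sub_mem_slitPlane hz hz₁
  have hne : ((n : ℝ) + 1) * ‖1 - ((1 : ℝ) : ℂ) * z‖ ≠ 0 :=
    mul_ne_zero (by positivity) (norm_ne_zero_iff.2 (Complex.slitPlane_ne_zero hslit))
  have hleft : ContinuousAt (fun r : ℝ ↦
      ‖-Complex.log (1 - r * z) - ∑ j ∈ range n, (r * z) ^ (j + 1) / (j + 1)‖) 1 := by
    fun_prop (disch := assumption)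
  have hright : ContinuousAt (fun r : ℝ ↦ 2 / ((n + 1) * ‖1 - r * z‖)) 1 := by
    fun_prop (disch := assumption)
  have hlt : ∀ᶠ r : ℝ in 𝓝[<] 1, ‖(r : ℂ) * z‖ < 1 := by
    filter_upwards [Ioo_mem_nhdsLT one_pos] with r hr
    rw [norm_mul, Complex.norm_of_nonneg hr.1.le]
    exact (mul_le_of_le_one_right hr.1.le hz).trans_lt hr.2
  simpa using le_of_tendsto_of_tendsto (hleft.tendsto.mono_left nhdsWithin_le_nhds)
    (hright.tendsto.mono_left nhdsWithin_le_nhds)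
    (hlt.mono fun r hr ↦ norm_neg_log_one_sub_sub_sum_le_of_norm_lt_one hr n)

end Logarithm

section IntegralBound

open Finset Set

variable {f ρ : ℝ → ℝ}

theorem sub_le_mul_integral_of_hasDerivAt_neg_mul {a b : ℝ} (hab : a ≤ b)
    (hf : ContinuousOn f (Icc a b)) (hderiv : ∀ u ∈ Ioo a b, HasDerivAt f (-(u * ρ u)) u)
    (hρ : ∀ u ∈ Ioo a b, 0 ≤ ρ u) (hint : IntervalIntegrable ρ volume a b) :
    f a - f b ≤ b * ∫ u in a..b, ρ u := by
  have h := intervalIntegral.sub_le_integral_of_hasDeriv_right_of_le hab hf.neg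
    (fun u hu ↦ (hderiv u hu).neg.hasDerivWithinAt)
    (((intervalIntegrable_iff_integrableOn_Icc_of_le hab).1 hint).const_mul b) fun u hu ↦ by
      rw [neg_neg]
      exact mul_le_mul_of_nonneg_right hu.2.le (hρ u hu)
  rwa [intervalIntegral.integral_const_mul, Pi.neg_apply, Pi.neg_apply, neg_sub_neg] at h

theorem sum_sub_div_le_mul_integral {h : ℝ} {n : ℕ} (hh : 0 ≤ h)
    (hf : ContinuousOn f (Icc 0 (n * h)))
    (hderiv : ∀ u ∈ Ioo 0 (n * h), HasDerivAt f (-(u * ρ u)) u)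
    (hρ : ∀ u ∈ Ioo 0 (n * h), 0 ≤ ρ u) (hint : IntervalIntegrable ρ volume 0 (n * h)) :
    ∑ j ∈ range n, (f (j * h) - f ((j + 1 : ℕ) * h)) / (j + 1) ≤
      h * ∫ u in 0..n * h, ρ u := by
  have hmono : Monotone fun j : ℕ ↦ j * h := fun i j hij ↦ by
    dsimp only
    gcongr
  have hle (j : ℕ) : j * h ≤ (j + 1 : ℕ) * h := hmono j.le_succ
  have hnonneg (j : ℕ) : 0 ≤ j * h := by positivity
  have hintj (j : ℕ) (hj : j < n) :
      IntervalIntegrable ρ volume (j * h) ((j + 1 : ℕ) * h) :=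
    hint.mono_set <| by
      rw [uIcc_of_le (hle j), uIcc_of_le (hnonneg n)]
      exact Icc_subset_Icc (hnonneg j) (hmono hj)
  have hadj := intervalIntegral.sum_integral_adjacent_intervals hintj
  rw [Nat.cast_zero, zero_mul] at hadj
  rw [← hadj, mul_sum]
  refine sum_le_sum fun j hj ↦ ?_
  have hj' := hmono (mem_range.1 hj)
  have hsub := Ioo_subset_Ioo (hnonneg j) hj'
  rw [div_le_iff₀ (by positivity)]
  calc f (j * h) - f ((j + 1 : ℕ) * h)
      ≤ (j + 1 : ℕ) * h * ∫ u in j * h..(j + 1 : ℕ) * h, ρ u :=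
        sub_le_mul_integral_of_hasDerivAt_neg_mul (hle j)
          (hf.mono (Icc_subset_Icc (hnonneg j) hj')) (fun u hu ↦ hderiv u (hsub hu))
          (fun u hu ↦ hρ u (hsub hu)) (hintj j (mem_range.1 hj))
    _ = h * (∫ u in j * h..(j + 1 : ℕ) * h, ρ u) * (j + 1) := by
        push_cast
        ring

end IntegralBound

section Sawtooth

open Finset

/-- The `2π`-periodic sawtooth wave, equal to `(π - x) / 2` on `(0, 2π)`: the sum of the Fourier
series `∑ sin (j x) / j`, encoded as the boundary value of `Im (-log (1 - z))` at `z = exp (i x)`.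
Since `Complex.log 0 = 0`, it vanishes at the jumps `x ∈ 2πℤ`. -/
noncomputable def sawtooth (x : ℝ) : ℝ :=
  (-Complex.log (1 - Complex.exp (Complex.I * x))).im

/-- The `n`-th partial sum of the Fourier series of `sawtooth`. -/
noncomputable def sawtoothPartialSum (n : ℕ) (x : ℝ) : ℝ :=
  ∑ j ∈ range n, sin ((j + 1) * x) / (j + 1)

theorem sawtoothPartialSum_eq_im (n : ℕ) (x : ℝ) :
    sawtoothPartialSum n x =
      (∑ j ∈ range n, Complex.exp (Complex.I * x) ^ (j + 1) / (j + 1)).im := by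
  rw [sawtoothPartialSum, Complex.im_sum]
  refine sum_congr rfl fun j _ ↦ ?_
  have hexp : Complex.exp (Complex.I * x) ^ (j + 1) =
      Complex.exp (((j + 1) * x : ℝ) * Complex.I) := by
    rw [← Complex.exp_nat_mul]
    congr 1
    push_cast
    ring
  have hcast : (j : ℂ) + 1 = ((j + 1 : ℝ) : ℂ) := by push_cast; rfl
  rw [hexp, hcast, Complex.div_ofReal_im, Complex.exp_ofReal_mul_I_im]

theorem abs_sawtooth_sub_partialSum_le (x : ℝ) (n : ℕ) :
    |sawtooth x - sawtoothPartialSum n x| ≤ 1 / (n + 1) * (1 / |sin (x / 2)|) := by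
  rw [sawtoothPartialSum_eq_im, sawtooth, ← Complex.sub_im]
  by_cases hx : Complex.exp (Complex.I * x) = 1
  · rw [hx, sub_self, Complex.log_zero, neg_zero, zero_sub, Complex.neg_im, Complex.im_sum,
      sum_eq_zero fun j _ ↦ ?_, neg_zero, abs_zero]
    · positivity
    · have hreal : (1 : ℂ) ^ (j + 1) / (j + 1) = ((1 / (j + 1) : ℝ) : ℂ) := by simp
      rw [hreal, Complex.ofReal_im]
  · have hz : ‖Complex.exp (Complex.I * x)‖ ≤ 1 := (Complex.norm_exp_I_mul_ofReal x).le
    calc _ ≤ _ := Complex.abs_im_le_norm _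
      _ ≤ _ := norm_neg_log_one_sub_sub_sum_le hz hx n
      _ = 1 / (n + 1) * (1 / |sin (x / 2)|) := by
        rw [norm_sub_rev, Complex.norm_exp_I_mul_ofReal_sub_one, norm_mul, Real.norm_ofNat,
          Real.norm_eq_abs, mul_left_comm, div_mul_cancel_left₀ two_ne_zero, one_div_mul_one_div,
          one_div]

theorem sawtooth_neg (x : ℝ) : sawtooth (-x) = -sawtooth x := by
  have hconj : 1 - Complex.exp (Complex.I * ↑(-x)) =
      (starRingEnd ℂ) (1 - Complex.exp (Complex.I * x)) := by
    rw [map_sub, map_one, ← Complex.exp_conj]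
    simp
  have harg : (1 - Complex.exp (Complex.I * x)).arg ≠ π := by
    by_cases hx : Complex.exp (Complex.I * x) = 1
    · simpa [hx] using pi_ne_zero.symm
    · exact Complex.slitPlane_arg_ne_pi
        (one_sub_mem_slitPlane (Complex.norm_exp_I_mul_ofReal x).le hx)
  rw [sawtooth, hconj, Complex.log_conj _ harg, ← map_neg, Complex.conj_im, sawtooth]

theorem one_sub_exp_I_mul (x : ℝ) :
    1 - Complex.exp (Complex.I * x) = ((2 * sin (x / 2) : ℝ) : ℂ) *
      (Complex.cos ((x - π) / 2 : ℝ) + Complex.sin ((x - π) / 2 : ℝ) * Complex.I) := by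
  have hcos : cos x = 1 - 2 * sin (x / 2) ^ 2 := by
    rw [sin_sq_eq_half_sub, mul_div_cancel₀ x two_ne_zero]
    ring
  have hsin : sin x = 2 * sin (x / 2) * cos (x / 2) := by
    rw [← sin_two_mul, mul_div_cancel₀ x two_ne_zero]
  rw [mul_comm Complex.I, Complex.exp_mul_I]
  simp only [← Complex.ofReal_cos, ← Complex.ofReal_sin]
  rw [sub_div, cos_sub_pi_div_two, sin_sub_pi_div_two, hcos, hsin]
  push_cast
  ring

theorem sawtooth_of_pos {x : ℝ} (hx : 0 < x) (hx' : x < 2 * π) : sawtooth x = (π - x) / 2 := by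
  have hsin : 0 < sin (x / 2) := sin_pos_of_pos_of_lt_pi (by linarith) (by linarith)
  rw [sawtooth, Complex.neg_im, Complex.log_im, one_sub_exp_I_mul,
    Complex.arg_mul_cos_add_sin_mul_I (by positivity) ⟨by linarith, by linarith⟩]
  ring

theorem sawtooth_eq {x : ℝ} (hx : |x| < 2 * π) : sawtooth x = (SignType.sign x * π - x) / 2 := by
  rw [abs_lt] at hx
  rcases lt_trichotomy x 0 with h | rfl | h
  · rw [← neg_neg x, sawtooth_neg, sawtooth_of_pos (by linarith) (by linarith), neg_neg,
      sign_neg h, SignType.coe_neg_one]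
    ring
  · simp [sawtooth]
  · rw [sawtooth_of_pos h hx.2, sign_pos h]
    simp

end Sawtooth

section StepFunction

open Finset

variable {α β θ : ℝ}

/-- The undamped partial sum `∑_{j=0}^{n} c_j cos(jθ)` of the Fourier series of `stepG α β`. -/
noncomputable def stepPartialSum (α β : ℝ) (n : ℕ) (θ : ℝ) : ℝ :=
  ∑ j ∈ range (n + 1), fourierC α β j * cos (j * θ)

theorem stepPartialSum_eq (α β : ℝ) (n : ℕ) (θ : ℝ) :
    stepPartialSum α β n θ = (α - β) / π + 1 / π *
      (sawtoothPartialSum n (θ + α) - sawtoothPartialSum n (θ - α)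
        - sawtoothPartialSum n (θ + β) + sawtoothPartialSum n (θ - β)) := by
  simp only [stepPartialSum, sawtoothPartialSum]
  rw [sum_range_succ', ← sum_sub_distrib, ← sum_sub_distrib, ← sum_add_distrib, mul_sum, add_comm]
  congr 1
  · simp [fourierC]
  · refine sum_congr rfl fun j _ ↦ ?_
    simp only [fourierC, Nat.cast_add_one, mul_add (j + 1 : ℝ), mul_sub (j + 1 : ℝ), sin_add,
      sin_sub]
    ring

theorem stepG_eq (hβα : β < α) (hαθ : 0 < θ + α) (hβθ : 0 < θ + β) (hα : θ + α < 2 * π)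
    (hα' : -(2 * π) < θ - α) (hβ' : θ - β < 2 * π) :
    stepG α β θ = (α - β) / π + 1 / π *
      (sawtooth (θ + α) - sawtooth (θ - α) - sawtooth (θ + β) + sawtooth (θ - β)) := by
  rw [sawtooth_of_pos hαθ hα, sawtooth_of_pos hβθ (by linarith),
    sawtooth_eq (abs_lt.2 ⟨hα', by linarith⟩), sawtooth_eq (abs_lt.2 ⟨by linarith, hβ'⟩), stepG]
  rcases lt_trichotomy θ α with h | rfl | h
  · rcases lt_trichotomy θ β with h' | rfl | h'
    · simp [h.ne, h'.ne, h'.not_gt, sign_neg (sub_neg.2 h), sign_neg (sub_neg.2 h')]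
      field
    · simp [sign_neg (sub_neg.2 h)]
      field
    · simp [h.ne, h'.ne', h, h', sign_neg (sub_neg.2 h), sign_pos (sub_pos.2 h')]
      field
  · simp [sign_pos (sub_pos.2 hβα)]
    field
  · have h' := hβα.trans h
    simp [h.ne', h'.ne', h.not_gt, sign_pos (sub_pos.2 h), sign_pos (sub_pos.2 h')]
    field

-- At `θ = α` and `θ = β` the singular term is `1 / |sin 0|`, which is `0` in Lean.
theorem Jfun_eq (α β θ : ℝ) :
    Jfun α β θ = 1 / |sin ((θ + α) / 2)| + 1 / |sin ((θ - α) / 2)|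
      + 1 / |sin ((θ + β) / 2)| + 1 / |sin ((θ - β) / 2)| := by
  rw [Jfun]
  split_ifs with hα hβ
  · subst hα
    simp [add_assoc]
  · subst hβ
    rw [← abs_neg (sin ((α - θ) / 2)), ← sin_neg, ← neg_div, neg_sub, add_comm α]
    simp
    ring
  · rfl

theorem Jfun_nonneg (α β θ : ℝ) : 0 ≤ Jfun α β θ := by
  rw [Jfun_eq]
  positivity

theorem abs_stepG_sub_stepPartialSum_le (hβ : 0 < β) (hβα : β < α) (hα : α < π)
    (hθ : θ ∈ Set.Ioo (-β) (2 * π - α)) (n : ℕ) :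
    |stepG α β θ - stepPartialSum α β n θ| ≤ Jfun α β θ / (π * (n + 1)) := by
  obtain ⟨hθβ, hθα⟩ := hθ
  have bound (x : ℝ) := abs_le.1 (abs_sawtooth_sub_partialSum_le x n)
  rw [stepG_eq hβα (by linarith) (by linarith) (by linarith) (by linarith) (by linarith),
    stepPartialSum_eq, add_sub_add_left_eq_sub, ← mul_sub, abs_mul, abs_of_pos (by positivity)]
  calc _ ≤ 1 / π * (1 / (n + 1) * Jfun α β θ) := by
        gcongr
        rw [Jfun_eq, mul_add, mul_add, mul_add, abs_le]
        constructor <;>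
          linarith [bound (θ + α), bound (θ - α), bound (θ + β), bound (θ - β)]
    _ = Jfun α β θ / (π * (n + 1)) := by
        field

end StepFunction

section Lanczos

open Set

variable {m u : ℝ}

theorem sinc_pos_of_mem_Ico (hu : u ∈ Ico 0 π) : 0 < sinc u := by
  rcases hu.1.eq_or_lt with rfl | hu₀
  · simp
  · rw [sinc_of_ne_zero hu₀.ne']
    exact div_pos (sin_pos_of_pos_of_lt_pi hu₀ hu.2) hu₀

theorem hasDerivAt_sinc (hu : u ≠ 0) :
    HasDerivAt sinc ((u * cos u - sin u) / u ^ 2) u := by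
  have hquot := (hasDerivAt_sin u).div (hasDerivAt_id u) hu
  refine (hquot.congr_of_eventuallyEq ?_).congr_deriv (by simp [mul_comm])
  filter_upwards [eventually_ne_nhds hu] with y hy
  simp [sinc_of_ne_zero hy]

theorem mul_cos_le_sin (hu : u ∈ Icc 0 π) : u * cos u ≤ sin u := by
  rcases lt_or_ge u (π / 2) with h | h
  · have hcos : 0 < cos u := cos_pos_of_mem_Ioo ⟨by linarith [pi_pos, hu.1], h⟩
    rw [← le_div_iff₀ hcos, ← tan_eq_sin_div_cos]
    exact le_tan hu.1 h
  · exact (mul_nonpos_of_nonneg_of_nonpos hu.1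
      (cos_nonpos_of_pi_div_two_le_of_le h (by linarith [hu.2]))).trans
      (sin_nonneg_of_nonneg_of_le_pi hu.1 hu.2)

theorem antitoneOn_sinc : AntitoneOn sinc (Icc 0 π) := by
  refine antitoneOn_of_hasDerivWithinAt_nonpos (convex_Icc 0 π) continuous_sinc.continuousOn
    (f' := fun u ↦ (u * cos u - sin u) / u ^ 2) (fun u hu ↦ ?_) fun u hu ↦ ?_
  all_goals rw [interior_Icc] at hu
  · exact (hasDerivAt_sinc hu.1.ne').hasDerivWithinAt
  · exact div_nonpos_of_nonpos_of_nonneg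
      (sub_nonpos.2 (mul_cos_le_sin (Ioo_subset_Icc_self hu))) (sq_nonneg u)

theorem continuous_sinc_rpow (hm : 0 ≤ m) : Continuous fun u ↦ sinc u ^ m :=
  continuous_sinc.rpow_const fun _ ↦ .inr hm

/-- The integrand of `lanczosCm`, for which `-(sinc ^ m)' = m u * lanczosIntegrand m u`. -/
noncomputable def lanczosIntegrand (m u : ℝ) : ℝ :=
  sin u ^ (m - 1) * (sin u - u * cos u) / u ^ (m + 2)

theorem measurable_lanczosIntegrand (m : ℝ) : Measurable (lanczosIntegrand m) := by
  unfold lanczosIntegrand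
  fun_prop

theorem lanczosIntegrand_nonneg (m : ℝ) (hu : u ∈ Icc 0 π) : 0 ≤ lanczosIntegrand m u :=
  div_nonneg (mul_nonneg (rpow_nonneg (sin_nonneg_of_nonneg_of_le_pi hu.1 hu.2) _)
    (sub_nonneg.2 (mul_cos_le_sin hu))) (rpow_nonneg hu.1 _)

theorem lanczosIntegrand_eq_sinc_rpow_mul (m : ℝ) (hu : u ∈ Ioo 0 π) :
    lanczosIntegrand m u = sinc u ^ (m - 1) * ((sin u - u * cos u) / u ^ 3) := by
  have hsin : 0 < sin u := sin_pos_of_pos_of_lt_pi hu.1 hu.2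
  have hpow : u ^ (m + 2) = u ^ (m - 1) * u ^ 3 := by
    rw [← rpow_natCast u 3, ← rpow_add hu.1]
    congr 1
    push_cast
    ring
  rw [sinc_of_ne_zero hu.1.ne', div_rpow hsin.le hu.1.le, div_mul_div_comm, ← hpow,
    lanczosIntegrand]

theorem hasDerivAt_sinc_rpow (m : ℝ) (hu : u ∈ Ioo 0 π) :
    HasDerivAt (fun u ↦ sinc u ^ m) (-(u * (m * lanczosIntegrand m u))) u := by
  have hpos := sinc_pos_of_mem_Ico (Ioo_subset_Ico_self hu)
  refine ((hasDerivAt_sinc hu.1.ne').rpow_const (.inl hpos.ne')).congr_deriv ?_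
  have hu₀ := hu.1.ne'
  rw [lanczosIntegrand_eq_sinc_rpow_mul m hu]
  field

theorem lanczosIntegrand_le_sinc_rpow (m : ℝ) (hu : u ∈ Ioo 0 π) :
    lanczosIntegrand m u ≤ sinc u ^ (m - 1) := by
  have hpos := sinc_pos_of_mem_Ico (Ioo_subset_Ico_self hu)
  rw [lanczosIntegrand_eq_sinc_rpow_mul m hu]
  refine mul_le_of_le_one_right (by positivity) ?_
  rw [div_le_one (pow_pos hu.1 3)]
  have hcube : 0 < u ^ 3 := pow_pos hu.1 3
  calc sin u - u * cos u ≤ u - u * (1 - u ^ 2 / 2) :=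
        sub_le_sub (sin_le hu.1.le) (mul_le_mul_of_nonneg_left one_sub_sq_div_two_le_cos hu.1.le)
    _ = u ^ 3 / 2 := by ring
    _ ≤ u ^ 3 := half_le_self hcube.le

theorem integrableOn_lanczosIntegrand_Ioc (m : ℝ) {a : ℝ} (ha : a < π) :
    IntegrableOn (lanczosIntegrand m) (Ioc 0 a) := by
  have hcont : ContinuousOn (fun u ↦ sinc u ^ (m - 1)) (Icc 0 a) :=
    continuous_sinc.continuousOn.rpow_const fun u hu ↦
      .inl (sinc_pos_of_mem_Ico ⟨hu.1, hu.2.trans_lt ha⟩).ne'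
  refine (hcont.integrableOn_Icc.mono_set Ioc_subset_Icc_self).mono'
    (measurable_lanczosIntegrand m).aestronglyMeasurable ?_
  filter_upwards [ae_restrict_mem measurableSet_Ioc] with u hu
  have hu' : u ∈ Ioo 0 π := ⟨hu.1, hu.2.trans_lt ha⟩
  rw [norm_of_nonneg (lanczosIntegrand_nonneg m (Ioo_subset_Icc_self hu'))]
  exact lanczosIntegrand_le_sinc_rpow m hu'

theorem integrableOn_mul_lanczosIntegrand (hm : 0 < m) :
    IntegrableOn (fun u ↦ u * (m * lanczosIntegrand m u)) (Ioc 0 π) := by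
  refine intervalIntegral.integrableOn_deriv_of_nonneg (g := fun u ↦ -sinc u ^ m)
    (continuous_sinc_rpow hm.le).neg.continuousOn (fun u hu ↦ ?_) fun u hu ↦ ?_
  · simpa using (hasDerivAt_sinc_rpow m hu).fun_neg
  · exact mul_nonneg hu.1.le (mul_nonneg hm.le (lanczosIntegrand_nonneg m (Ioo_subset_Icc_self hu)))

theorem integrableOn_lanczosIntegrand_Ioo (hm : 0 < m) {a : ℝ} (ha : 0 < a) :
    IntegrableOn (lanczosIntegrand m) (Ioo a π) := by
  have hint := ((integrableOn_mul_lanczosIntegrand hm).mono_set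
    (Ioo_subset_Ioc_self.trans (Ioc_subset_Ioc_left ha.le))).const_mul (a * m)⁻¹
  refine hint.mono' (measurable_lanczosIntegrand m).aestronglyMeasurable ?_
  filter_upwards [ae_restrict_mem measurableSet_Ioo] with u hu
  have hq := lanczosIntegrand_nonneg m ⟨(ha.trans hu.1).le, hu.2.le⟩
  rw [norm_of_nonneg hq]
  calc lanczosIntegrand m u ≤ u / a * lanczosIntegrand m u :=
        le_mul_of_one_le_left hq ((one_le_div ha).2 hu.1.le)
    _ = (a * m)⁻¹ * (u * (m * lanczosIntegrand m u)) := by field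

theorem integrableOn_lanczosIntegrand (hm : 0 < m) :
    IntegrableOn (lanczosIntegrand m) (Ioo 0 π) := by
  rw [← Ioc_union_Ioo_eq_Ioo pi_div_two_pos.le (half_lt_self pi_pos)]
  exact (integrableOn_lanczosIntegrand_Ioc m (half_lt_self pi_pos)).union
    (integrableOn_lanczosIntegrand_Ioo hm pi_div_two_pos)

theorem intervalIntegrable_lanczosIntegrand (hm : 0 < m) {a b : ℝ} (ha : 0 ≤ a) (hab : a ≤ b)
    (hb : b ≤ π) : IntervalIntegrable (lanczosIntegrand m) volume a b := by
  rw [intervalIntegrable_iff_integrableOn_Ioo_of_le hab]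
  exact (integrableOn_lanczosIntegrand hm).mono_set (Ioo_subset_Ioo ha hb)

theorem integral_lanczosIntegrand_le (hm : 0 < m) {b : ℝ} (hb : b ∈ Icc 0 π) :
    ∫ u in 0..b, lanczosIntegrand m u ≤ lanczosCm m := by
  rw [intervalIntegral.integral_of_le hb.1, integral_Ioc_eq_integral_Ioo]
  refine setIntegral_mono_set (integrableOn_lanczosIntegrand hm) ?_
    (Ioo_subset_Ioo_right hb.2).eventuallyLE
  filter_upwards [ae_restrict_mem measurableSet_Ioo] with u hu
  exact lanczosIntegrand_nonneg m (Ioo_subset_Icc_self hu)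

end Lanczos

section Damping

open Finset

variable {m : ℝ} {k : ℕ}

theorem sum_sinc_rpow_sub_div_le (hm : 0 < m) {h : ℝ} {n : ℕ} (hh : 0 ≤ h) (hn : n * h ≤ π) :
    ∑ j ∈ range n, (sinc (j * h) ^ m - sinc ((j + 1 : ℕ) * h) ^ m) / (j + 1) ≤
      h * (m * lanczosCm m) := by
  have hnh : 0 ≤ n * h := by positivity
  have hsub : Set.Ioo 0 (n * h) ⊆ Set.Ioo 0 π := Set.Ioo_subset_Ioo_right hn
  calc _ ≤ h * ∫ u in 0..n * h, m * lanczosIntegrand m u :=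
        sum_sub_div_le_mul_integral (f := fun u ↦ sinc u ^ m) hh
          (continuous_sinc_rpow hm.le).continuousOn
          (fun u hu ↦ hasDerivAt_sinc_rpow m (hsub hu))
          (fun u hu ↦ mul_nonneg hm.le
            (lanczosIntegrand_nonneg m (Set.Ioo_subset_Icc_self (hsub hu))))
          ((intervalIntegrable_lanczosIntegrand hm le_rfl hnh hn).const_mul m)
    _ ≤ h * (m * lanczosCm m) := by
        rw [intervalIntegral.integral_const_mul]
        gcongr
        exact integral_lanczosIntegrand_le hm ⟨hnh, hn⟩

theorem dampL_eq (m : ℝ) (k j : ℕ) : dampL m k j = sinc (j * (π / (k + 1))) ^ m := by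
  rw [dampL]
  split_ifs with hj
  · simp [hj]
  · rw [sinc_of_ne_zero (by positivity), mul_div_assoc]

theorem dampL_zero (m : ℝ) (k : ℕ) : dampL m k 0 = 1 := if_pos rfl

theorem mul_pi_div_mem_Ico {j : ℕ} (hj : j ≤ k) : j * (π / (k + 1)) ∈ Set.Ico 0 π := by
  refine ⟨by positivity, ?_⟩
  rw [mul_div_left_comm]
  refine mul_lt_of_lt_one_right pi_pos ((div_lt_one (by positivity)).2 ?_)
  exact_mod_cast Nat.lt_succ_of_le hj

theorem dampL_nonneg (m : ℝ) {j : ℕ} (hj : j ≤ k) : 0 ≤ dampL m k j := by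
  rw [dampL_eq]
  exact rpow_nonneg (sinc_pos_of_mem_Ico (mul_pi_div_mem_Ico hj)).le m

theorem dampL_succ_le (hm : 0 ≤ m) {j : ℕ} (hj : j < k) : dampL m k (j + 1) ≤ dampL m k j := by
  rw [dampL_eq, dampL_eq]
  have hmem := mul_pi_div_mem_Ico hj.le
  have hmem' := mul_pi_div_mem_Ico (Nat.succ_le_of_lt hj)
  refine rpow_le_rpow (sinc_pos_of_mem_Ico hmem').le (antitoneOn_sinc
    (Set.Ico_subset_Icc_self hmem) (Set.Ico_subset_Icc_self hmem') ?_) hm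
  gcongr
  exact j.le_succ

theorem sum_dampL_sub_div_le (hm : 0 < m) {n : ℕ} (hn : n ≤ k) :
    ∑ j ∈ range n, (dampL m k j - dampL m k (j + 1)) / (j + 1) ≤
      π / (k + 1) * (m * lanczosCm m) := by
  simp only [dampL_eq]
  exact sum_sinc_rpow_sub_div_le hm (by positivity) (mul_pi_div_mem_Ico hn).2.le

theorem damped_fourier_step_error_bound_general {α β θ : ℝ} (hβ : 0 < β) (hβα : β < α)
    (hα : α < π) (hm : 0 < m) {k' : ℕ} (hk'k : k' ≤ k) (hθ : θ ∈ Set.Ioo (-β) (2 * π - α)) :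
    |stepG α β θ - dampedGk α β m k k' θ| ≤
      dampL m k k' * Jfun α β θ / (π * (k' + 1)) + m * lanczosCm m * Jfun α β θ / (k + 1) := by
  have habel := norm_smul_sub_sum_range_succ_smul_le
    (b := fun j ↦ Jfun α β θ / (π * (j + 1))) (c := fun j ↦ fourierC α β j * cos (j * θ))
    (fun j hj ↦ dampL_succ_le hm.le (hj.trans_le hk'k)) (dampL_nonneg m hk'k)
    fun j _ ↦ abs_stepG_sub_stepPartialSum_le hβ hβα hα hθ j
  have hdamped : ∑ j ∈ range (k' + 1), dampL m k j • (fourierC α β j * cos (j * θ)) =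
      dampedGk α β m k k' θ :=
    sum_congr rfl fun j _ ↦ by rw [smul_eq_mul, mul_left_comm, mul_assoc, mul_left_comm]
  have hJ := Jfun_nonneg α β θ
  rw [dampL_zero, one_smul, hdamped, ← mul_div_assoc] at habel
  refine habel.trans (add_le_add_right ?_ _)
  calc ∑ j ∈ range k', (dampL m k j - dampL m k (j + 1)) * (Jfun α β θ / (π * (j + 1)))
      = Jfun α β θ / π * ∑ j ∈ range k', (dampL m k j - dampL m k (j + 1)) / (j + 1) := by
        rw [mul_sum]
        exact sum_congr rfl fun j _ ↦ by field
    _ ≤ Jfun α β θ / π * (π / (k + 1) * (m * lanczosCm m)) := by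
        gcongr
        exact sum_dampL_sub_div_le hm hk'k
    _ = m * lanczosCm m * Jfun α β θ / (k + 1) := by field

end Damping

/-- Pointwise bound for the damped Fourier partial sums of the step function:
`|g(θ) - g^m_{k',k}(θ)| ≤ d^m_{k',k} J(θ)/(π(k'+1)) + m C_m J(θ)/(k+1) + mπ(π-θ)/(3(k+1)²)`. -/
theorem damped_fourier_step_error_bound (α β : ℝ) (hβ : 0 < β) (hβα : β < α)
    (hα : α < Real.pi) (m : ℝ) (hm : 0 < m) (k k' : ℕ) (hk' : 1 ≤ k') (hk'k : k' ≤ k)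
    (θ : ℝ) (hθ : θ ∈ Set.Icc (0 : ℝ) Real.pi) :
    |stepG α β θ - dampedGk α β m k k' θ|
      ≤ dampL m k k' * Jfun α β θ / (Real.pi * (k' + 1))
        + m * lanczosCm m * Jfun α β θ / (k + 1)
        + m * Real.pi * (Real.pi - θ) / (3 * (k + 1) ^ 2) := by
  have hθπ := sub_nonneg.2 hθ.2
  exact (damped_fourier_step_error_bound_general hβ hβα hα hm hk'k
    ⟨by linarith [hθ.1], by linarith⟩).trans (le_add_of_nonneg_right (by positivity))
end
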